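/- arXiv:2402.10451 — 2 statements merged into one kernel-verified Lean document; each statement's English description precedes it below -/
import Mathlib

section
/- Let f₁,…,f_n be monotone linear functions that are not colinear. Then the following are equivalent: (1) f₁,…,f_n are potentially identical; (2) a permutation σ of [n] is minimum if and only if it is counterclockwise. -/
/-- A linear function `x ↦ a*x + b`. -/
structure LinFun where
  a : ℝ
  b : ℝ

namespace LinFun

/-- Evaluation of a linear function. -/
def eval (f : LinFun) (x : ℝ) : ℝ := f.a * x + f.b

/-- Composition: `h.comp g` is the linear function `x ↦ h (g x)`. -/
def comp (h g : LinFun) : LinFun := ⟨h.a * g.a, h.a * g.b + h.b⟩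

/-- The identical linear function `x ↦ x`. -/
def idf : LinFun := ⟨1, 0⟩

/-- `f` is the identical function (equivalently, its vector `(β f, 1 - α f)` is `(0,0)`,
i.e. its angle is `⊥`). -/
def IsId (f : LinFun) : Prop := f = idf

/-- The Euclidean norm of the vector `(β f, 1 - α f)` associated to `f`. -/
noncomputable def vecNorm (f : LinFun) : ℝ := Real.sqrt (f.b ^ 2 + (1 - f.a) ^ 2)

/-- The polar angle in `[0, 2π)` of the vector `(β f, 1 - α f)` associated to `f`
(meaningful only when `f` is not identical). -/
noncomputable def theta (f : LinFun) : ℝ :=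
  if 0 ≤ Complex.arg ⟨f.b, 1 - f.a⟩ then Complex.arg ⟨f.b, 1 - f.a⟩
  else Complex.arg ⟨f.b, 1 - f.a⟩ + 2 * Real.pi

end LinFun

/-- Congruence of angles modulo `2π`: `x ≡_{2π} y`. -/
def Cong (x y : ℝ) : Prop := ∃ k : ℤ, x - y = 2 * Real.pi * k

/-- The set `[t1, t2]_{2π}`. -/
def Icc2pi (t1 t2 : ℝ) : Set ℝ :=
  {θ | ∃ l1 l2 : ℝ, Cong l1 t1 ∧ Cong l2 t2 ∧ 0 ≤ l2 - l1 ∧ l2 - l1 < 2 * Real.pi ∧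
    θ ∈ Set.Icc l1 l2}

/-- The set `(t1, t2)_{2π}`. -/
def Ioo2pi (t1 t2 : ℝ) : Set ℝ :=
  {θ | ∃ l1 l2 : ℝ, Cong l1 t1 ∧ Cong l2 t2 ∧ 0 ≤ l2 - l1 ∧ l2 - l1 < 2 * Real.pi ∧
    θ ∈ Set.Ioo l1 l2}

/-- Composite of a list of linear functions: `compList [g₁, …, g_m] = g_m ∘ ⋯ ∘ g₁`. -/
def compList (L : List LinFun) : LinFun := L.foldl (fun acc g => g.comp acc) LinFun.idf

/-- The list `f_{σ(1)}, …, f_{σ(n)}` (0-indexed positions). -/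
def permList {n : ℕ} (f : Fin n → LinFun) (σ : Equiv.Perm (Fin n)) : List LinFun :=
  List.ofFn fun i => f (σ i)

/-- `f^σ = f_{σ(n)} ∘ ⋯ ∘ f_{σ(1)}`. -/
def permComp {n : ℕ} (f : Fin n → LinFun) (σ : Equiv.Perm (Fin n)) : LinFun :=
  compList (permList f σ)

/-- The composite of the functions at the (0-indexed) positions `a, a+1, …, b` of `σ`:
`f_{σ(b)} ∘ ⋯ ∘ f_{σ(a)}` (in 0-indexed notation). -/
def segComp {n : ℕ} (f : Fin n → LinFun) (σ : Equiv.Perm (Fin n)) (a b : ℕ) : LinFun :=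
  compList (((permList f σ).drop a).take (b + 1 - a))

/-- The composite corresponding to the `k`-shift `σ_k` of `σ`:
`f^{σ_k} = f_{σ(k)} ∘ ⋯ ∘ f_{σ(1)} ∘ f_{σ(n)} ∘ ⋯ ∘ f_{σ(k+1)}` (1-indexed notation). -/
def shiftComp {n : ℕ} (f : Fin n → LinFun) (σ : Equiv.Perm (Fin n)) (k : ℕ) : LinFun :=
  compList ((permList f σ).rotate k)

/-- `σ` is a minimum (optimal) permutation for `f₁, …, f_n`. -/
def IsMinimum {n : ℕ} (f : Fin n → LinFun) (σ : Equiv.Perm (Fin n)) : Prop :=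
  ∀ ρ : Equiv.Perm (Fin n), (permComp f σ).b ≤ (permComp f ρ).b

/-- `μ` belongs to the neighbourhood `N(σ)`: it is obtained from `σ` by swapping two
adjacent blocks of positions, `(l, …, m)` and `(m+1, …, r)` (0-indexed, `l ≤ m < r < n`). -/
def InNbhd {n : ℕ} (σ μ : Equiv.Perm (Fin n)) : Prop :=
  ∃ (l m r : ℕ) (_ : l ≤ m) (_ : m < r) (_ : r < n),
    (∀ i : Fin n, (i.val < l ∨ r < i.val) → μ i = σ i) ∧
    (∀ i : Fin n, ∀ _ : l ≤ i.val, ∀ _ : i.val < l + r - m,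
      μ i = σ ⟨i.val + m + 1 - l, by omega⟩) ∧
    (∀ i : Fin n, ∀ _ : l + r - m ≤ i.val, ∀ _ : i.val ≤ r,
      μ i = σ ⟨i.val + m - r, by omega⟩)

/-- `σ` is locally optimal for `f₁, …, f_n`. -/
def LocallyOptimal {n : ℕ} (f : Fin n → LinFun) (σ : Equiv.Perm (Fin n)) : Prop :=
  ∀ μ : Equiv.Perm (Fin n), InNbhd σ μ → (permComp f σ).b ≤ (permComp f μ).b

/-- `σ` is counterclockwise: ignoring the identical functions, some rotation of the sequence
of angles `θ(f_{σ(1)}), …, θ(f_{σ(n)})` is nondecreasing. -/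
def Counterclockwise {n : ℕ} (f : Fin n → LinFun) (σ : Equiv.Perm (Fin n)) : Prop :=
  ∃ c : ℕ, ∀ i j : Fin n, ¬ (f (σ i)).IsId → ¬ (f (σ j)).IsId →
    ((c ≤ i.val ∧ i ≤ j) ∨ (i ≤ j ∧ j.val < c) ∨ (c ≤ i.val ∧ j.val < c)) →
    (f (σ i)).theta ≤ (f (σ j)).theta

/-- `f₁, …, f_n` are colinear: all vectors lie on one line through the origin. -/
def Colinear {n : ℕ} (f : Fin n → LinFun) : Prop :=
  ∃ lam : ℝ, ∀ i : Fin n,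
    (f i).IsId ∨ Cong ((f i).theta) lam ∨ Cong ((f i).theta) (lam + Real.pi)

/-- `f₁, …, f_n` are potentially identical: some counterclockwise permutation composes
to the identical function. -/
def PotentiallyIdentical {n : ℕ} (f : Fin n → LinFun) : Prop :=
  ∃ σ : Equiv.Perm (Fin n), Counterclockwise f σ ∧ (permComp f σ).IsId

/-- The ε-perturbation `f^{(ε)}` of a linear function. -/
noncomputable def epsPert (f : LinFun) (ε : ℝ) : LinFun := if f.a = 0 then ⟨ε, f.b⟩ else f

/-!
With composition written as a product, exchanging two adjacent blocks of a product changes its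
constant term by a positive multiple of the signed area spanned by the vectors of the two blocks.
The vertices `vec(P) / α(P)`, for `P` running through the partial composites, have the vectors of
the functions as edge directions, so a minimum permutation makes every triple of vertices turn
counterclockwise. Starting from its lowest vertex such a non-collinear polygon first climbs and
then descends, hence its edges are sorted by angle: minimum permutations are counterclockwise.

A counterclockwise permutation is a rotation of a sorted one. Sorted products agree because
functions of equal angle commute, and a rotation of a trivial product is trivial. So once one
counterclockwise composite is the identity, all of them are, including that of a minimum one.
Conversely, if all rotations of a sorted product have the same constant term, then each of its
factors is parallel to the vector of the whole product, which must therefore vanish.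
-/

open List

theorem prod_eq_prod_of_perm_of_pairwise {M : Type*} [Monoid M] {r : M → M → Prop}
    (hr : ∀ x y, r x y → r y x → Commute x y) {L L' : List M} (h : L ~ L') (hL : L.Pairwise r)
    (hL' : L'.Pairwise r) : L.prod = L'.prod := by
  induction L generalizing L' with
  | nil => rw [h.nil_eq]
  | cons x L ih =>
    obtain ⟨s, t, rfl⟩ := append_of_mem (h.mem_iff.1 mem_cons_self)
    have hst : L ~ s ++ t := (h.trans perm_middle).cons_inv
    have hcomm : Commute x s.prod := Commute.list_prod_right _ _ fun y hy =>
      hr x y ((pairwise_cons.1 hL).1 y (hst.mem_iff.2 (mem_append_left t hy)))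
        ((pairwise_append.1 hL').2.2 y hy x mem_cons_self)
    rw [prod_cons, ih hst hL.of_cons (hL'.sublist ((sublist_cons_self x t).append_left s)),
      prod_append, prod_append, prod_cons, ← mul_assoc, hcomm.eq, mul_assoc]

lemma pairwise_drop_append_take_ofFn {α : Type*} {n : ℕ} {g : Fin n → α} {r : α → α → Prop}
    {c : ℕ} : ((ofFn g).drop c ++ (ofFn g).take c).Pairwise r ↔ ∀ i j : Fin n,
      c ≤ i.val ∧ i < j ∨ i < j ∧ j.val < c ∨ c ≤ i.val ∧ j.val < c → r (g i) (g j) := by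
  rw [pairwise_append]
  simp only [pairwise_iff_getElem, mem_drop_iff_getElem, mem_take_iff_getElem, getElem_drop,
    getElem_take, List.getElem_ofFn, length_drop, length_take, length_ofFn]
  constructor
  · rintro ⟨hdrop, htake, hcross⟩ i j (⟨hi, hij⟩ | ⟨hij, hj⟩ | ⟨hi, hj⟩)
    · simpa [Nat.add_sub_cancel' hi, Nat.add_sub_cancel' (hi.trans hij.le)] using
        hdrop (i - c) (j - c) (by omega) (by omega) (by omega)
    · exact htake i j (by omega) (by omega) hij
    · exact hcross _ ⟨i - c, by omega, by simp [Nat.add_sub_cancel' hi]⟩ _ ⟨j, by omega, rfl⟩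
  · grind

lemma isRotated_iff_exists_drop_append_take {α : Type*} {L M : List α} :
    L ~r M ↔ ∃ c, L.drop c ++ L.take c = M := by
  constructor
  · intro h
    obtain ⟨c, hc, rfl⟩ := isRotated_iff_mod.1 h
    exact ⟨c, (rotate_eq_drop_append_take hc).symm⟩
  · rintro ⟨c, rfl⟩
    simpa only [take_append_drop] using isRotated_append (l := L.take c) (l' := L.drop c)

lemma perm_ofFn_iff {α : Type*} {n : ℕ} {g : Fin n → α} {M : List α} :
    M ~ ofFn g ↔ ∃ σ : Equiv.Perm (Fin n), ofFn (g ∘ σ) = M := by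
  classical
  refine ⟨fun h => ?_, fun ⟨σ, hσ⟩ => hσ ▸ σ.ofFn_comp_perm g⟩
  have hn : M.length = n := h.length_eq.trans (length_ofFn ..)
  subst hn
  refine ⟨.ofBijective (finCongr (length_ofFn ..) ∘ h.idxBij)
    ((finCongr _).bijective.comp ⟨h.idxBij_injective, h.idxBij_surjective⟩),
    ext_getElem (length_ofFn ..) fun i _ hi => ?_⟩
  have hget := h.getElem_idxBij_eq_getElem ⟨i, hi⟩
  rw [List.getElem_ofFn] at hget ⊢
  exact hget

lemma prod_eq_one_iff_of_isRotated {M : Type*} [Monoid M] [IsDedekindFiniteMonoid M] {L L' : List M}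
    (h : L ~r L') : L.prod = 1 ↔ L'.prod = 1 := by
  obtain ⟨c, rfl⟩ := isRotated_iff_exists_drop_append_take.1 h
  rw [← prod_take_mul_prod_drop L c, prod_append]
  exact ⟨mul_eq_one_symm, mul_eq_one_symm⟩

/-! ### Convex chains in the plane -/

/-- `Q` never descends and later ascends again. -/
def IsUnimodal {ι α : Type*} [Preorder ι] [Preorder α] (Q : ι → α) : Prop :=
  ∀ ⦃i j k⦄, i ≤ j → j ≤ k → Q i ≤ Q j ∨ Q k ≤ Q j

/-- The values of `Q` in the cyclic order of its index set starting at `s`. The value at `s` occurs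
both first and last. -/
def rotateFrom {ι α : Type*} [Preorder ι] (Q : ι → α) (s : ι) (x : Set.Ici s ⊕ₗ Set.Iic s) : α :=
  Sum.elim (fun i : Set.Ici s => Q i) (fun i : Set.Iic s => Q i) (ofLex x)

/-- The coordinate plane with the first coordinate taken as the vertical one. In the lexicographic
order the positive vectors are then exactly those with polar angle in `[0, π)`. -/
abbrev LexPlane (K : Type*) := K ×ₗ K

namespace LexPlane

section CommRing

variable {R : Type*} [CommRing R]

/-- The signed area of the parallelogram spanned by `u` and `v`, positive when `v` lies
counterclockwise of `u`. -/
def det : LexPlane R →ₗ[R] LexPlane R →ₗ[R] R :=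
  LinearMap.mk₂ R (fun u v => (ofLex u).2 * (ofLex v).1 - (ofLex u).1 * (ofLex v).2)
    (fun u u' v => by simp only [ofLex_add, Prod.fst_add, Prod.snd_add]; ring)
    (fun c u v => by simp only [ofLex_smul, Prod.smul_fst, Prod.smul_snd, smul_eq_mul]; ring)
    (fun u v v' => by simp only [ofLex_add, Prod.fst_add, Prod.snd_add]; ring)
    (fun c u v => by simp only [ofLex_smul, Prod.smul_fst, Prod.smul_snd, smul_eq_mul]; ring)

lemma det_apply (u v : LexPlane R) :
    det u v = (ofLex u).2 * (ofLex v).1 - (ofLex u).1 * (ofLex v).2 := rfl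

lemma isAlt_det : (det (R := R)).IsAlt := fun u => by rw [det_apply]; ring

lemma det_neg_right (u v : LexPlane R) : det u (-v) = det v u := by
  rw [map_neg, isAlt_det.neg]

lemma det_smul_cramer (u v w : LexPlane R) : det u w • v = det v w • u + det u v • w := by
  apply ofLex.injective
  ext <;> simp only [det_apply, ofLex_add, ofLex_smul, Prod.fst_add, Prod.snd_add, Prod.smul_fst,
    Prod.smul_snd, smul_eq_mul] <;> ring

/-- Twice the signed area of the triangle `p q r`. -/
def orient (p q r : LexPlane R) : R := det (q - p) (r - p)

lemma orient_rotate (p q r : LexPlane R) : orient q r p = orient p q r := by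
  simp only [orient, det_apply, ofLex_sub, Prod.fst_sub, Prod.snd_sub]
  ring

lemma orient_eq_det_sub (p q r : LexPlane R) : orient p q r = det (q - p) (r - q) := by
  rw [orient, ← sub_add_sub_cancel r q p, map_add, isAlt_det, add_zero]

lemma orient_eq_add (o p q r : LexPlane R) :
    orient p q r = det (p - o) (q - o) + det (q - o) (r - o) - det (p - o) (r - o) := by
  simp only [orient, det_apply, ofLex_sub, Prod.fst_sub, Prod.snd_sub]
  ring

end CommRing

variable {K : Type*} [Field K]

lemma exists_smul_eq_of_det_eq_zero {u v : LexPlane K} (hu : u ≠ 0) (h : det u v = 0) :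
    ∃ t : K, v = t • u := by
  obtain ⟨w, hw⟩ : ∃ w, det u w ≠ 0 := by
    by_contra! hdet
    have h₁ := hdet (toLex (1, 0))
    have h₂ := hdet (toLex (0, 1))
    simp only [det_apply, ofLex_toLex, mul_one, mul_zero, sub_zero, zero_sub, neg_eq_zero]
      at h₁ h₂
    exact hu (ofLex.injective (Prod.ext h₂ h₁))
  refine ⟨(det u w)⁻¹ * det v w, ?_⟩
  rw [mul_smul, eq_inv_smul_iff₀ hw, det_smul_cramer, h, zero_smul, add_zero]

variable [LinearOrder K]

/-- Every increasing triple of points of `Q` turns weakly counterclockwise, as do the vertices of a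
convex polygon in counterclockwise order. -/
def IsConvexChain {ι : Type*} [Preorder ι] (Q : ι → LexPlane K) : Prop :=
  ∀ ⦃i j k⦄, i ≤ j → j ≤ k → 0 ≤ orient (Q i) (Q j) (Q k)

/-- The order of polar angles in `[0, 2π)` on nonzero vectors, expressed by half-planes and signed
areas. -/
def CcwLE (u v : LexPlane K) : Prop :=
  (0 < v → 0 < u) ∧ ((0 < u ↔ 0 < v) → 0 ≤ det u v)

protected theorem IsConvexChain.rotateFrom {ι : Type*} [LinearOrder ι] {Q : ι → LexPlane K}
    (hQ : IsConvexChain Q) (s : ι) : IsConvexChain (rotateFrom Q s) := by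
  simp only [IsConvexChain, Lex.forall, Sum.forall, Sum.Lex.inl_le_inl_iff, Sum.Lex.inr_le_inr_iff,
    Sum.Lex.inl_le_inr, Sum.Lex.not_inr_le_inl, false_imp_iff, true_imp_iff, imp_true_iff,
    and_true, true_and]
  refine ⟨fun i => ⟨fun j => ⟨fun k => @hQ i j k, fun k hij => ?_⟩, fun j k hjk => ?_⟩,
    fun i j k => @hQ i j k⟩
  · exact (orient_rotate _ _ _).trans_ge (hQ (k.2.trans i.2) hij)
  · exact (orient_rotate _ _ _).symm.trans_ge (hQ hjk (k.2.trans i.2))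

variable [IsStrictOrderedRing K]

instance : PosSMulStrictMono K (LexPlane K) where
  smul_lt_smul_of_pos_left c hc u v h := by
    rw [Prod.Lex.lt_iff] at h ⊢
    exact h.imp (mul_lt_mul_of_pos_left · hc)
      (And.imp (congrArg (c * ·)) (mul_lt_mul_of_pos_left · hc))

lemma det_nonneg_iff_of_parallel {u v : LexPlane K} (hu : 0 < u) (hv : 0 < v) (h : det u v = 0)
    (w : LexPlane K) : 0 ≤ det u w ↔ 0 ≤ det v w := by
  have key : det u w • v = det v w • u := by rw [det_smul_cramer, h, zero_smul, add_zero]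
  rw [← smul_nonneg_iff_nonneg_of_pos_right hv, key, smul_nonneg_iff_nonneg_of_pos_right hu]

lemma det_eq_zero_of_valley {a b c : LexPlane K} (hb : 0 ≤ b) (hba : b < a) (hbc : b < c)
    (hdab : 0 ≤ det a b) (hdbc : 0 ≤ det b c) (hdac : 0 ≤ det a c)
    (harea : 0 ≤ det a b + det b c - det a c) :
    det a b = 0 ∧ det b c = 0 ∧ det a c = 0 := by
  have hsum : det b c • (a - b) + (det a b • (c - b) +
      (det a b + det b c - det a c) • b) = 0 := by
    rw [sub_smul, add_smul, det_smul_cramer a b c, smul_sub, smul_sub]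
    abel
  have h₁ := smul_nonneg hdbc (sub_pos.2 hba).le
  have h₂ := smul_nonneg hdab (sub_pos.2 hbc).le
  have h₃ := smul_nonneg harea hb
  rw [add_eq_zero_iff_of_nonneg h₁ (add_nonneg h₂ h₃), add_eq_zero_iff_of_nonneg h₂ h₃,
    smul_eq_zero_iff_left (sub_pos.2 hba).ne', smul_eq_zero_iff_left (sub_pos.2 hbc).ne'] at hsum
  exact ⟨hsum.2.1, hsum.1, by linarith [hsum.1, hsum.2.1]⟩

lemma ccwLE_smul_smul_iff {s t : K} (hs : 0 < s) (ht : 0 < t) {u v : LexPlane K} :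
    CcwLE (s • u) (t • v) ↔ CcwLE u v := by
  simp only [CcwLE, smul_pos_iff_of_pos_left hs, smul_pos_iff_of_pos_left ht, map_smul,
    LinearMap.smul_apply, smul_eq_mul, mul_nonneg_iff_of_pos_left hs,
    mul_nonneg_iff_of_pos_left ht]

namespace IsConvexChain

variable {ι : Type*}

section Preorder

variable [Preorder ι] {Q : ι → LexPlane K}

theorem det_chord_nonneg (hQ : IsConvexChain Q)
    (hu : IsUnimodal Q) {i i' j j' : ι} (hi : i ≤ i') (hij : i' ≤ j) (hj : j ≤ j')
    (h : Q i < Q i' ∧ Q j < Q j' ∨ Q i' < Q i ∧ Q j' < Q j) :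
    0 ≤ det (Q i' - Q i) (Q j' - Q j) := by
  by_contra! hneg
  have hright : 0 ≤ det (Q j - Q i') (Q j' - Q j) :=
    orient_eq_det_sub (Q i') (Q j) (Q j') ▸ hQ hij hj
  have hleft : 0 < det (Q i' - Q i) (Q j - Q i') := by
    have hsum : 0 ≤ det (Q i' - Q i) (Q j' - Q i') :=
      orient_eq_det_sub (Q i) (Q i') (Q j') ▸ hQ hi (hij.trans hj)
    rw [← sub_add_sub_cancel (Q j') (Q j), map_add] at hsum
    linarith
  have cramer := det_smul_cramer (Q i' - Q i) (Q j - Q i') (Q j' - Q j)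
  rcases h with ⟨hi₀, hj₀⟩ | ⟨hi₀, hj₀⟩
  · have hdesc : Q j < Q i' := by
      by_contra! hle
      refine (smul_nonpos_of_nonpos_of_nonneg hneg.le (sub_nonneg.2 hle)).not_gt ?_
      rw [cramer]
      exact add_pos_of_nonneg_of_pos (smul_nonneg hright (sub_pos.2 hi₀).le)
        (smul_pos hleft (sub_pos.2 hj₀))
    exact (hu hij hj).elim hdesc.not_ge hj₀.not_ge
  · have hasc : Q i' < Q j := by
      by_contra! hle
      refine (smul_nonneg_of_nonpos_of_nonpos hneg.le (sub_nonpos.2 hle)).not_gt ?_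
      rw [cramer]
      exact add_neg_of_nonpos_of_neg (smul_nonpos_of_nonneg_of_nonpos hright (sub_neg.2 hi₀).le)
        (smul_neg_of_pos_of_neg hleft (sub_neg.2 hj₀))
    exact (hu hi hij).elim hi₀.not_ge hasc.not_ge

theorem ccwLE_chord (hQ : IsConvexChain Q) (hu : IsUnimodal Q)
    {i i' j j' : ι} (hi : i ≤ i') (hij : i' ≤ j) (hj : j ≤ j') (hQi : Q i ≠ Q i')
    (hQj : Q j ≠ Q j') : CcwLE (Q i' - Q i) (Q j' - Q j) := by
  simp only [CcwLE, sub_pos]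
  refine ⟨fun hasc => ?_, fun h => hQ.det_chord_nonneg hu hi hij hj ?_⟩
  · by_contra hdesc
    have hdesc : Q i' < Q i := lt_of_le_of_ne (not_lt.1 hdesc) hQi.symm
    have h₁ := (hu hi (hij.trans hj)).resolve_left hdesc.not_ge
    have h₂ := (hu (hi.trans hij) hj).resolve_right hasc.not_ge
    exact (h₂.trans_lt (hasc.trans_le h₁)).not_gt hdesc
  · rcases hQi.lt_or_gt with hi₀ | hi₀
    · exact .inl ⟨hi₀, h.1 hi₀⟩
    · exact .inr ⟨hi₀, lt_of_le_of_ne (not_lt.1 fun hj₀ => (h.2 hj₀).not_gt hi₀) hQj.symm⟩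

end Preorder

variable [LinearOrder ι] {Q : ι → LexPlane K}

lemma det_sub_eq_zero_of_valley (hQ : IsConvexChain Q) {o a b c : ι} (ho : IsBot o)
    (hmin : ∀ i, Q o ≤ Q i) (hab : a ≤ b) (hbc : b ≤ c) (hba : Q b < Q a) (hbc' : Q b < Q c)
    (z : ι) : det (Q a - Q o) (Q z - Q o) = 0 := by
  have hdet {i j} (hij : i ≤ j) : 0 ≤ det (Q i - Q o) (Q j - Q o) := hQ (ho i) hij
  have harea {i j k} (hij : i ≤ j) (hjk : j ≤ k) := orient_eq_add (Q o) _ _ _ ▸ hQ hij hjk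
  have hb : 0 ≤ Q b - Q o := sub_nonneg.2 (hmin b)
  have hba₀ : Q b - Q o < Q a - Q o := sub_lt_sub_right hba _
  have hbc₀ : Q b - Q o < Q c - Q o := sub_lt_sub_right hbc' _
  obtain ⟨hdab, hdbc, hdac⟩ := det_eq_zero_of_valley hb hba₀ hbc₀ (hdet hab) (hdet hbc)
    (hdet (hab.trans hbc)) (harea hab hbc)
  generalize hA : Q a - Q o = A at *
  generalize hB : Q b - Q o = B at *
  generalize hC : Q c - Q o = C at *
  have hA₀ : 0 < A := hb.trans_lt hba₀
  have hdet_C := det_nonneg_iff_of_parallel hA₀ (hb.trans_lt hbc₀) hdac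
  have hdet_CB := det_nonneg_iff_of_parallel hA₀ (sub_pos.2 hbc₀)
    (by rw [map_sub, hdac, hdab, sub_zero])
  have hdet_AB := det_nonneg_iff_of_parallel hA₀ (sub_pos.2 hba₀)
    (by rw [map_sub, isAlt_det, hdab, sub_zero])
  suffices 0 ≤ det A (Q z - Q o) ∧ 0 ≤ det A (-(Q z - Q o)) from
    le_antisymm (neg_nonneg.1 (map_neg (det A) _ ▸ this.2)) this.1
  obtain hza | haz := le_total z a
  · have hZBC := harea (hza.trans hab) hbc
    rw [hB, hC, hdbc, add_zero, ← map_sub, ← neg_sub C B, map_neg, isAlt_det.neg] at hZBC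
    exact ⟨(hdet_CB _).2 hZBC, det_neg_right A _ ▸ hA ▸ hdet hza⟩
  obtain hzc | hcz := le_total z c
  · exact ⟨hA ▸ hdet haz, (hdet_C _).2 (det_neg_right C _ ▸ hC ▸ hdet hzc)⟩
  · have hABZ := harea hab (hbc.trans hcz)
    rw [hA, hB, hdab, zero_add, ← LinearMap.map_sub₂, ← neg_sub A B, LinearMap.map_neg₂,
      ← map_neg] at hABZ
    exact ⟨(hdet_C _).2 (hC ▸ hdet hcz), (hdet_AB _).2 hABZ⟩

theorem collinear_of_valley (hQ : IsConvexChain Q) {o a b c : ι} (ho : IsBot o)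
    (hmin : ∀ i, Q o ≤ Q i) (hab : a ≤ b) (hbc : b ≤ c) (hba : Q b < Q a) (hbc' : Q b < Q c) :
    Collinear K (Set.range Q) := by
  rw [collinear_iff_of_mem (Set.mem_range_self o)]
  refine ⟨Q a - Q o, ?_⟩
  rintro _ ⟨z, rfl⟩
  have ha : Q a - Q o ≠ 0 := sub_ne_zero.2 ((hmin b).trans_lt hba).ne'
  obtain ⟨t, ht⟩ := exists_smul_eq_of_det_eq_zero ha
    (hQ.det_sub_eq_zero_of_valley ho hmin hab hbc hba hbc' z)
  exact ⟨t, by rw [← ht, vadd_eq_add, sub_add_cancel]⟩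

theorem isUnimodal (hQ : IsConvexChain Q) {o : ι} (ho : IsBot o) (hmin : ∀ i, Q o ≤ Q i)
    (hnc : ¬ Collinear K (Set.range Q)) : IsUnimodal Q := by
  intro i j k hij hjk
  by_contra! h
  exact hnc (hQ.collinear_of_valley ho hmin hij hjk h.1 h.2)

theorem exists_isUnimodal_rotateFrom [Finite ι] (hQ : IsConvexChain Q)
    (hnc : ¬ Collinear K (Set.range Q)) : ∃ s, IsUnimodal (rotateFrom Q s) := by
  have : Nonempty ι := not_isEmpty_iff.1 fun _ =>
    hnc (Set.range_eq_empty Q ▸ collinear_empty K (LexPlane K))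
  obtain ⟨s, hs⟩ := Finite.exists_min Q
  refine ⟨s, (hQ.rotateFrom s).isUnimodal (o := toLex (.inl ⟨s, le_rfl⟩)) ?_ ?_ ?_⟩
  · exact Lex.forall.2 (Sum.forall.2 ⟨fun i => Sum.Lex.inl_le_inl_iff.2 i.2,
      fun _ => Sum.Lex.inl_le_inr _ _⟩)
  · exact Lex.forall.2 (Sum.forall.2 ⟨fun i => hs i, fun i => hs i⟩)
  · refine fun hcol => hnc (hcol.subset ?_)
    rintro _ ⟨i, rfl⟩
    obtain hi | hi := le_total s i
    · exact ⟨toLex (.inl ⟨i, hi⟩), rfl⟩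
    · exact ⟨toLex (.inr ⟨i, hi⟩), rfl⟩

theorem exists_ccwLE_edge {n : ℕ} {Q : Fin (n + 1) → LexPlane K} (hQ : IsConvexChain Q)
    (hnc : ¬ Collinear K (Set.range Q)) :
    ∃ c : ℕ, ∀ i j : Fin n, Q i.castSucc ≠ Q i.succ → Q j.castSucc ≠ Q j.succ →
      (c ≤ i.val ∧ i < j ∨ i < j ∧ j.val < c ∨ c ≤ i.val ∧ j.val < c) →
      CcwLE (Q i.succ - Q i.castSucc) (Q j.succ - Q j.castSucc) := by
  obtain ⟨s, hs⟩ := hQ.exists_isUnimodal_rotateFrom hnc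
  have hchord {x x' y y' : Set.Ici s ⊕ₗ Set.Iic s} (hx : x ≤ x') (hxy : x' ≤ y) (hy : y ≤ y') :=
    (hQ.rotateFrom s).ccwLE_chord hs hx hxy hy
  refine ⟨s, fun i j hi hj => ?_⟩
  have hi₀ : i.castSucc ≤ i.succ := i.castSucc_lt_succ.le
  have hj₀ : j.castSucc ≤ j.succ := j.castSucc_lt_succ.le
  rintro (⟨hsi, hij⟩ | ⟨hij, hjs⟩ | ⟨hsi, hjs⟩)
  · have hij₀ : i.succ ≤ j.castSucc := Fin.succ_le_castSucc_iff.2 hij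
    have hsi₀ : s ≤ i.castSucc := hsi
    exact hchord (x := toLex (.inl ⟨_, hsi₀⟩)) (x' := toLex (.inl ⟨_, hsi₀.trans hi₀⟩))
      (y := toLex (.inl ⟨_, (hsi₀.trans hi₀).trans hij₀⟩))
      (y' := toLex (.inl ⟨_, ((hsi₀.trans hi₀).trans hij₀).trans hj₀⟩))
      (Sum.Lex.inl_le_inl_iff.2 hi₀) (Sum.Lex.inl_le_inl_iff.2 hij₀)
      (Sum.Lex.inl_le_inl_iff.2 hj₀) hi hj
  · have hij₀ : i.succ ≤ j.castSucc := Fin.succ_le_castSucc_iff.2 hij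
    have hjs₀ : j.succ ≤ s := hjs
    exact hchord (x := toLex (.inr ⟨_, hi₀.trans (hij₀.trans (hj₀.trans hjs₀))⟩))
      (x' := toLex (.inr ⟨_, hij₀.trans (hj₀.trans hjs₀)⟩))
      (y := toLex (.inr ⟨_, hj₀.trans hjs₀⟩)) (y' := toLex (.inr ⟨_, hjs₀⟩))
      (Sum.Lex.inr_le_inr_iff.2 hi₀) (Sum.Lex.inr_le_inr_iff.2 hij₀)
      (Sum.Lex.inr_le_inr_iff.2 hj₀) hi hj
  · have hsi₀ : s ≤ i.castSucc := hsi
    have hjs₀ : j.succ ≤ s := hjs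
    exact hchord (x := toLex (.inl ⟨_, hsi₀⟩)) (x' := toLex (.inl ⟨_, hsi₀.trans hi₀⟩))
      (y := toLex (.inr ⟨_, hj₀.trans hjs₀⟩)) (y' := toLex (.inr ⟨_, hjs₀⟩))
      (Sum.Lex.inl_le_inl_iff.2 hi₀) (Sum.Lex.inl_le_inr _ _)
      (Sum.Lex.inr_le_inr_iff.2 hj₀) hi hj

end IsConvexChain

end LexPlane

/-! ### The monoid of linear functions -/

open LexPlane

attribute [ext] LinFun

namespace LinFun

/-- Linear functions form a monoid under composition in diagrammatic order, so that the composite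
of a list is its product. -/
instance : Monoid LinFun where
  one := idf
  mul f g := g.comp f
  mul_assoc f g h := LinFun.ext (mul_assoc h.a g.a f.a).symm <| by
    change h.a * (g.a * f.b + g.b) + h.b = h.a * g.a * f.b + (h.a * g.b + h.b)
    ring
  one_mul f := LinFun.ext (mul_one f.a) (by change f.a * 0 + f.b = f.b; ring)
  mul_one f := LinFun.ext (one_mul f.a) (by change 1 * f.b + 0 = f.b; ring)

lemma one_a : (1 : LinFun).a = 1 := rfl

lemma one_b : (1 : LinFun).b = 0 := rfl

lemma mul_a (f g : LinFun) : (f * g).a = g.a * f.a := rfl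

lemma mul_b (f g : LinFun) : (f * g).b = g.a * f.b + g.b := rfl

instance : IsDedekindFiniteMonoid LinFun where
  mul_eq_one_symm {f g} h := by
    have ha : g.a * f.a = 1 := congrArg a h
    have hb : g.a * f.b + g.b = 0 := congrArg b h
    refine LinFun.ext (by rw [mul_a, one_a, mul_comm, ha]) ?_
    rw [mul_b, one_b]
    linear_combination (-f.b) * ha + f.a * hb

lemma list_prod_a (L : List LinFun) : L.prod.a = (L.map a).prod := by
  induction L with
  | nil => rfl
  | cons f L ih => rw [prod_cons, mul_a, ih, map_cons, prod_cons, mul_comm]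

lemma list_prod_a_pos {L : List LinFun} (h : ∀ f ∈ L, 0 < f.a) : 0 < L.prod.a := by
  rw [list_prod_a]
  exact prod_pos (forall_mem_map.2 h)

/-- The vector `(β f, 1 - α f)`, with its second coordinate placed first as in `LexPlane`. -/
def vec (f : LinFun) : LexPlane ℝ := toLex (1 - f.a, f.b)

lemma vec_one : vec 1 = 0 := by simp [vec, one_a, one_b]

lemma vec_eq_zero_iff {f : LinFun} : f.vec = 0 ↔ f = 1 := by
  refine ⟨fun h => ?_, fun h => h ▸ vec_one⟩
  obtain ⟨ha, hb⟩ := Prod.ext_iff.1 (congrArg ofLex h)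
  exact LinFun.ext (sub_eq_zero.1 ha).symm hb

lemma vec_mul (f g : LinFun) : (f * g).vec = g.a • f.vec + g.vec := by
  apply ofLex.injective
  ext
  · change 1 - g.a * f.a = g.a * (1 - f.a) + (1 - g.a)
    ring
  · rfl

lemma det_vec (f g : LinFun) : det f.vec g.vec = f.b * (1 - g.a) - (1 - f.a) * g.b := rfl

lemma swap_b_sub_b (k f g l : LinFun) :
    (k * g * f * l).b - (k * f * g * l).b = l.a * det f.vec g.vec := by
  simp only [mul_b, det_vec]
  ring

lemma commute_iff_det_vec_eq_zero {f g : LinFun} : Commute f g ↔ det f.vec g.vec = 0 := by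
  have hswap : (g * f).b - (f * g).b = det f.vec g.vec := by
    rw [mul_b, mul_b, det_vec]
    ring
  rw [← hswap, sub_eq_zero]
  exact ⟨fun h => congrArg b h.eq.symm, fun h => LinFun.ext (mul_comm _ _) h.symm⟩

/-- The point `((α g)⁻¹ β g, (α g)⁻¹ - 1)`. Composing `g` with further functions moves it along
positive multiples of their vectors. -/
noncomputable def vertex (g : LinFun) : LexPlane ℝ := g.a⁻¹ • g.vec

lemma vertex_mul_sub_vertex (g : LinFun) {h : LinFun} (hh : h.a ≠ 0) :
    (g * h).vertex - g.vertex = (g * h).a⁻¹ • h.vec := by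
  rw [vertex, vertex, vec_mul, mul_a, smul_add, smul_smul, mul_inv_rev,
    inv_mul_cancel_right₀ hh, add_sub_cancel_left]

theorem isConvexChain_vertex_take {L : List LinFun} (hpos : ∀ f ∈ L, 0 < f.a)
    (hmin : ∀ M, M ~ L → L.prod.b ≤ M.prod.b) :
    IsConvexChain fun k : ℕ => (L.take k).prod.vertex := by
  intro i j k hij hjk
  obtain ⟨B, hB⟩ := take_prefix_take_left (l := L) hij
  obtain ⟨C, hC⟩ := take_prefix_take_left (l := L) hjk
  change 0 ≤ orient (L.take i).prod.vertex (L.take j).prod.vertex (L.take k).prod.vertex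
  have hL : L.take i ++ B ++ C ++ L.drop k = L := by rw [hB, hC, take_append_drop]
  rw [orient_eq_det_sub, ← hC, ← hB]
  generalize L.take i = A at *
  generalize L.drop k = D at *
  subst hL
  simp only [forall_mem_append] at hpos
  have hA₀ := list_prod_a_pos hpos.1.1.1
  have hB₀ := list_prod_a_pos hpos.1.1.2
  have hC₀ := list_prod_a_pos hpos.1.2
  have hD₀ := list_prod_a_pos hpos.2
  have hdet : 0 ≤ det B.prod.vec C.prod.vec := by
    have hperm : A ++ C ++ B ++ D ~ A ++ B ++ C ++ D := by
      simpa only [append_assoc, perm_append_left_iff] using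
        perm_append_comm_assoc C B D
    have hle := hmin _ hperm
    simp only [prod_append] at hle
    rwa [← sub_nonneg, swap_b_sub_b, mul_nonneg_iff_of_pos_left hD₀] at hle
  simp only [prod_append, vertex_mul_sub_vertex _ hB₀.ne', vertex_mul_sub_vertex _ hC₀.ne',
    map_smul, LinearMap.smul_apply, smul_eq_mul, mul_a]
  positivity

end LinFun

namespace LexPlane

open Real

/-- The unit vector with polar angle `θ`. -/
noncomputable def polar (θ : ℝ) : LexPlane ℝ := toLex (sin θ, cos θ)

lemma det_polar (θ φ : ℝ) : det (polar θ) (polar φ) = sin (φ - θ) := by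
  rw [polar, polar, det_apply, sin_sub]
  simp only [ofLex_toLex]
  ring

lemma polar_pos_iff {θ : ℝ} (hθ : θ ∈ Set.Ico 0 (2 * π)) : 0 < polar θ ↔ θ < π := by
  obtain rfl | hθ₀ := hθ.1.eq_or_lt
  · simp [polar, Prod.Lex.lt_iff, pi_pos]
  obtain h | rfl | h := lt_trichotomy θ π
  · simp [polar, Prod.Lex.lt_iff, sin_pos_of_pos_of_lt_pi hθ₀ h, h]
  · simp [polar, Prod.Lex.lt_iff]
  · have hsin : sin θ < 0 := by
      rw [← neg_pos, ← sin_sub_pi]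
      exact sin_pos_of_pos_of_lt_pi (by linarith) (by linarith [hθ.2])
    simp [polar, Prod.Lex.lt_iff, hsin.not_gt, hsin.ne', h.le]

lemma ccwLE_polar_iff {θ φ : ℝ} (hθ : θ ∈ Set.Ico 0 (2 * π)) (hφ : φ ∈ Set.Ico 0 (2 * π)) :
    CcwLE (polar θ) (polar φ) ↔ θ ≤ φ := by
  rw [CcwLE, polar_pos_iff hθ, polar_pos_iff hφ, det_polar]
  obtain ⟨hθ₀, hθ₁⟩ := hθ
  obtain ⟨hφ₀, hφ₁⟩ := hφ
  refine ⟨fun ⟨himp, hsin⟩ => ?_, fun hle => ⟨hle.trans_lt, fun hiff => ?_⟩⟩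
  · by_contra! hlt
    have hiff : θ < π ↔ φ < π := ⟨hlt.trans, himp⟩
    have hdist : θ - φ < π := by grind
    have hpos := sin_pos_of_pos_of_lt_pi (sub_pos.2 hlt) hdist
    rw [← neg_sub, sin_neg] at hpos
    exact (neg_pos.1 hpos).not_ge (hsin hiff)
  · exact sin_nonneg_of_nonneg_of_le_pi (sub_nonneg.2 hle) (by grind)

end LexPlane

namespace LinFun

lemma theta_mem_Ico (f : LinFun) : f.theta ∈ Set.Ico 0 (2 * Real.pi) := by
  have hlower := Complex.neg_pi_lt_arg ⟨f.b, 1 - f.a⟩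
  have hupper := Complex.arg_le_pi ⟨f.b, 1 - f.a⟩
  rw [theta]
  split_ifs with h <;> constructor <;> linarith

lemma vecNorm_smul_polar_theta (f : LinFun) : f.vecNorm • polar f.theta = f.vec := by
  set z : ℂ := ⟨f.b, 1 - f.a⟩ with hz
  have hnorm : f.vecNorm = ‖z‖ := by
    rw [vecNorm, Complex.norm_def, Complex.normSq_apply, sq, sq]
  have hpolar : polar f.theta = polar z.arg := by
    rw [theta, ← hz]
    split_ifs
    · rfl
    · rw [polar, Real.sin_add_two_pi, Real.cos_add_two_pi, polar]
  rw [hnorm, hpolar]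
  exact congrArg toLex (Prod.ext z.norm_mul_sin_arg z.norm_mul_cos_arg)

lemma vecNorm_pos {f : LinFun} (hf : ¬ f.IsId) : 0 < f.vecNorm := by
  refine (Real.sqrt_nonneg _).lt_of_ne fun h => hf (vec_eq_zero_iff.1 ?_)
  rw [← vecNorm_smul_polar_theta, vecNorm, ← h, zero_smul]

lemma ccwLE_vec_iff {f g : LinFun} (hf : ¬ f.IsId) (hg : ¬ g.IsId) :
    CcwLE f.vec g.vec ↔ f.theta ≤ g.theta := by
  rw [← vecNorm_smul_polar_theta, ← vecNorm_smul_polar_theta,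
    ccwLE_smul_smul_iff (vecNorm_pos hf) (vecNorm_pos hg),
    ccwLE_polar_iff f.theta_mem_Ico g.theta_mem_Ico]

lemma det_vec_eq_sin (f g : LinFun) :
    det f.vec g.vec = f.vecNorm * g.vecNorm * Real.sin (g.theta - f.theta) := by
  rw [← vecNorm_smul_polar_theta, ← vecNorm_smul_polar_theta, LinearMap.map_smul₂, map_smul,
    det_polar, smul_eq_mul, smul_eq_mul, mul_assoc]

/-- The relation `θ f ≤ θ g`, also satisfied whenever one of the angles is undefined. -/
def AngleLE (f g : LinFun) : Prop := ¬ f.IsId → ¬ g.IsId → f.theta ≤ g.theta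

lemma AngleLE.commute {f g : LinFun} (hfg : AngleLE f g) (hgf : AngleLE g f) : Commute f g := by
  by_cases hf : f.IsId
  · exact hf ▸ Commute.one_left g
  by_cases hg : g.IsId
  · exact hg ▸ Commute.one_right f
  rw [commute_iff_det_vec_eq_zero, det_vec_eq_sin, (hfg hf hg).antisymm (hgf hg hf), sub_self,
    Real.sin_zero, mul_zero]

/-- The vectors of the functions in `L` lie on one line through the origin. -/
def AreParallel (L : List LinFun) : Prop :=
  ∃ v : LexPlane ℝ, ∀ f ∈ L, ∃ r : ℝ, f.vec = r • v

lemma exists_vertex_take_succ_sub_eq_smul {L : List LinFun} (hpos : ∀ f ∈ L, 0 < f.a)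
    (i : Fin L.length) :
    ∃ r : ℝ, 0 < r ∧ (L.take (i + 1)).prod.vertex - (L.take i).prod.vertex = r • L[i].vec := by
  have ha : 0 < (L.take (i + 1)).prod.a :=
    list_prod_a_pos fun f hf => hpos f (mem_of_mem_take hf)
  refine ⟨_, inv_pos.2 ha, ?_⟩
  rw [take_succ_eq_append_getElem i.2, prod_append, prod_singleton,
    vertex_mul_sub_vertex _ (hpos _ (getElem_mem i.2)).ne', Fin.getElem_fin]

lemma areParallel_of_collinear_vertex_take {L : List LinFun} (hpos : ∀ f ∈ L, 0 < f.a)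
    (h : Collinear ℝ (Set.range fun k : Fin (L.length + 1) => (L.take k).prod.vertex)) :
    AreParallel L := by
  obtain ⟨p, v, hv⟩ := (collinear_iff_exists_forall_eq_smul_vadd _).1 h
  rw [Set.forall_mem_range] at hv
  refine ⟨v, fun f hf => ?_⟩
  obtain ⟨i, rfl⟩ := get_of_mem hf
  obtain ⟨r, hr₀, hr⟩ := exists_vertex_take_succ_sub_eq_smul hpos i
  obtain ⟨s, hs⟩ := hv i.succ
  obtain ⟨t, ht⟩ := hv i.castSucc
  rw [Fin.val_succ] at hs
  rw [Fin.val_castSucc] at ht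
  rw [hs, ht, vadd_eq_add, vadd_eq_add, add_sub_add_right_eq_sub, ← sub_smul,
    eq_comm, ← eq_inv_smul_iff₀ hr₀.ne', smul_smul] at hr
  exact ⟨_, hr⟩

theorem exists_isRotated_pairwise_angleLE {L : List LinFun} (hpos : ∀ f ∈ L, 0 < f.a)
    (hmin : ∀ M, M ~ L → L.prod.b ≤ M.prod.b) (hnp : ¬ AreParallel L) :
    ∃ M, L ~r M ∧ M.Pairwise AngleLE := by
  have hQ : IsConvexChain fun k : Fin (L.length + 1) => (L.take k).prod.vertex :=
    fun i j k => @isConvexChain_vertex_take L hpos hmin i j k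
  obtain ⟨c, hc⟩ := hQ.exists_ccwLE_edge (mt (areParallel_of_collinear_vertex_take hpos) hnp)
  refine ⟨_, isRotated_iff_exists_drop_append_take.2 ⟨c, rfl⟩, ?_⟩
  suffices ((ofFn L.get).drop c ++ (ofFn L.get).take c).Pairwise AngleLE by rwa [ofFn_get] at this
  refine pairwise_drop_append_take_ofFn.2 fun i j hij hi hj => ?_
  obtain ⟨r, hr₀, hr⟩ := exists_vertex_take_succ_sub_eq_smul hpos i
  obtain ⟨t, ht₀, ht⟩ := exists_vertex_take_succ_sub_eq_smul hpos j
  have hi₀ := smul_ne_zero hr₀.ne' (vec_eq_zero_iff.not.2 hi)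
  have hj₀ := smul_ne_zero ht₀.ne' (vec_eq_zero_iff.not.2 hj)
  rw [← ccwLE_vec_iff hi hj, ← ccwLE_smul_smul_iff hr₀ ht₀]
  exact hr ▸ ht ▸ hc i j (sub_ne_zero.1 (hr ▸ hi₀)).symm (sub_ne_zero.1 (ht ▸ hj₀)).symm hij

theorem prod_eq_one_of_forall_isRotated {L : List LinFun}
    (hL : ∀ M, L ~r M → M.prod.b = L.prod.b) (hnp : ¬ AreParallel L) : L.prod = 1 := by
  have hprefix {A B : List LinFun} (hAB : A ++ B = L) : det L.prod.vec A.prod.vec = 0 := by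
    have hswap := swap_b_sub_b 1 A.prod B.prod 1
    rw [one_mul, mul_one, one_mul, mul_one, ← prod_append, ← prod_append,
      hL _ (hAB ▸ isRotated_append), hAB, sub_self, one_a, one_mul] at hswap
    rw [← hAB, prod_append, vec_mul, map_add, LinearMap.add_apply, LinearMap.map_smul₂, isAlt_det,
      smul_zero, zero_add, ← isAlt_det.neg, ← hswap, neg_zero]
  contrapose! hnp
  refine ⟨L.prod.vec, fun f hf => exists_smul_eq_of_det_eq_zero (vec_eq_zero_iff.not.2 hnp) ?_⟩
  obtain ⟨A, B, hAB⟩ := append_of_mem hf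
  have hAf : det L.prod.vec (A ++ [f]).prod.vec = 0 :=
    hprefix ((append_assoc A [f] B).trans hAB.symm)
  rwa [prod_append, prod_singleton, vec_mul, map_add, map_smul, hprefix hAB.symm, smul_zero,
    zero_add] at hAf

end LinFun

/-! ### Permutations -/

open LinFun

section Permutations

variable {n : ℕ} {f : Fin n → LinFun} {σ : Equiv.Perm (Fin n)}

lemma compList_eq_prod (L : List LinFun) : compList L = L.prod := L.prod_eq_foldl.symm

lemma counterclockwise_iff :
    Counterclockwise f σ ↔ ∃ M, permList f σ ~r M ∧ M.Pairwise AngleLE := by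
  simp only [isRotated_iff_exists_drop_append_take, exists_exists_eq_and, permList,
    pairwise_drop_append_take_ofFn, Counterclockwise, AngleLE]
  refine exists_congr fun c => forall₂_congr fun i j => ?_
  grind

lemma perm_permList_iff {M : List LinFun} : M ~ permList f σ ↔ ∃ ρ, permList f ρ = M :=
  perm_ofFn_iff.trans <|
    ((Equiv.mulLeft σ).surjective.exists (p := fun ρ => permList f ρ = M)).symm

lemma permComp_eq_prod : permComp f σ = (permList f σ).prod := compList_eq_prod _

lemma isMinimum_iff :
    IsMinimum f σ ↔ ∀ M, M ~ permList f σ → (permList f σ).prod.b ≤ M.prod.b := by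
  simp only [IsMinimum, permComp_eq_prod, perm_permList_iff, forall_exists_index,
    forall_apply_eq_imp_iff]

lemma exists_isMinimum (f : Fin n → LinFun) : ∃ σ, IsMinimum f σ :=
  Finite.exists_min fun σ => (permComp f σ).b

lemma cong_iff_coe_eq {x y : ℝ} : Cong x y ↔ (x : Real.Angle) = y :=
  Real.Angle.angle_eq_iff_two_pi_dvd_sub.symm

theorem colinear_of_forall_eq_smul {v : LexPlane ℝ}
    (h : ∀ i, ∃ r : ℝ, (f i).vec = r • v) : Colinear f := by
  by_cases hid : ∀ i, (f i).IsId
  · exact ⟨0, fun i => .inl (hid i)⟩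
  push Not at hid
  obtain ⟨j, hj⟩ := hid
  refine ⟨(f j).theta, fun i => or_iff_not_imp_left.2 fun hi => ?_⟩
  obtain ⟨s, hs⟩ := h i
  obtain ⟨t, ht⟩ := h j
  have hdet : det (f j).vec (f i).vec = 0 := by
    rw [hs, ht, map_smul, LinearMap.map_smul₂, isAlt_det, smul_zero, smul_zero]
  have hsin : Real.sin ((f i).theta - (f j).theta) = 0 := by
    rw [det_vec_eq_sin] at hdet
    exact (mul_eq_zero.1 hdet).resolve_left (mul_pos (vecNorm_pos hj) (vecNorm_pos hi)).ne'
  rw [← Real.Angle.sin_coe, Real.Angle.sin_eq_zero_iff, Real.Angle.coe_sub, sub_eq_zero,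
    sub_eq_iff_eq_add'] at hsin
  rwa [cong_iff_coe_eq, cong_iff_coe_eq, Real.Angle.coe_add]

lemma colinear_of_areParallel_permList (h : AreParallel (permList f σ)) : Colinear f := by
  obtain ⟨v, hv⟩ := h
  rw [permList, forall_mem_ofFn_iff] at hv
  exact colinear_of_forall_eq_smul (σ.surjective.forall.2 hv)

theorem IsMinimum.counterclockwise (hf : ∀ i, 0 < (f i).a) (hnc : ¬ Colinear f)
    (hσ : IsMinimum f σ) : Counterclockwise f σ :=
  counterclockwise_iff.2 <| exists_isRotated_pairwise_angleLE
    (forall_mem_ofFn_iff.2 fun i => hf (σ i)) (isMinimum_iff.1 hσ)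
    (mt colinear_of_areParallel_permList hnc)

theorem Counterclockwise.permComp_eq_one (h : PotentiallyIdentical f) (hσ : Counterclockwise f σ) :
    permComp f σ = 1 := by
  obtain ⟨τ, hτ, hid⟩ := h
  obtain ⟨M, hσM, hM⟩ := counterclockwise_iff.1 hσ
  obtain ⟨N, hτN, hN⟩ := counterclockwise_iff.1 hτ
  change permComp f τ = 1 at hid
  have hperm : M ~ N :=
    hσM.perm.symm.trans ((perm_permList_iff.2 ⟨σ, rfl⟩).trans hτN.perm)
  rw [permComp_eq_prod] at hid ⊢
  rw [prod_eq_one_iff_of_isRotated hσM,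
    prod_eq_prod_of_perm_of_pairwise (fun _ _ => AngleLE.commute) hperm hM hN,
    ← prod_eq_one_iff_of_isRotated hτN, hid]

lemma exists_permList_pairwise_angleLE (f : Fin n → LinFun) :
    ∃ σ, (permList f σ).Pairwise AngleLE := by
  refine ⟨Tuple.sort (theta ∘ f), pairwise_ofFn.2 fun i j hij _ _ => ?_⟩
  exact Tuple.monotone_sort (theta ∘ f) hij.le

theorem potentiallyIdentical_of_forall_counterclockwise_isMinimum (hnc : ¬ Colinear f)
    (h : ∀ σ, Counterclockwise f σ → IsMinimum f σ) : PotentiallyIdentical f := by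
  obtain ⟨σ, hσ⟩ := exists_permList_pairwise_angleLE f
  refine ⟨σ, counterclockwise_iff.2 ⟨_, .refl _, hσ⟩, ?_⟩
  change permComp f σ = 1
  rw [permComp_eq_prod]
  refine prod_eq_one_of_forall_isRotated (fun M hM => ?_)
    (mt colinear_of_areParallel_permList hnc)
  obtain ⟨ρ, rfl⟩ := perm_permList_iff.1 hM.perm.symm
  rw [← permComp_eq_prod, ← permComp_eq_prod]
  exact le_antisymm (h ρ (counterclockwise_iff.2 ⟨_, hM.symm, hσ⟩) σ)
    (h σ (counterclockwise_iff.2 ⟨_, .refl _, hσ⟩) ρ)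

end Permutations

/-- for non-colinear monotone linear functions, potential identity is
equivalent to "minimum ⇔ counterclockwise". -/
theorem stmt3 {n : ℕ} (f : Fin n → LinFun) (hf : ∀ i, 0 < (f i).a)
    (hnc : ¬ Colinear f) :
    PotentiallyIdentical f ↔
      (∀ σ : Equiv.Perm (Fin n), IsMinimum f σ ↔ Counterclockwise f σ) := by
  constructor
  · refine fun h σ => ⟨IsMinimum.counterclockwise hf hnc, fun hσ => ?_⟩
    obtain ⟨μ, hμ⟩ := exists_isMinimum f
    have heq : permComp f σ = permComp f μ :=
      (hσ.permComp_eq_one h).trans ((hμ.counterclockwise hf hnc).permComp_eq_one h).symm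
    exact fun ρ => heq ▸ hμ ρ
  · exact fun h => potentiallyIdentical_of_forall_counterclockwise_isMinimum hnc
      fun σ => (h σ).2
end

section
/- Let f₁,…,f_n be monotone linear functions. A permutation σ of [n] is optimal (i.e., β(f^σ) ≤ β(f^ρ) for every permutation ρ) if and only if σ is locally optimal (i.e., β(f^σ) ≤ β(f^μ) for every μ in the neighborhood N(σ)). -/
/-!
Let `[p, q] = β(p ∘ q) - β(q ∘ p)`, the cross product of the vectors `(β, 1 - α)` of `p` and `q`.
Swapping adjacent blocks `A`, `B` changes `β` of the composite by a positive multiple of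
`[A, B]`, so local optimality says that `[A, B] ≥ 0` for all adjacent blocks. Geometrically, the
composites of the suffixes of the sequence, seen as points `(-β, α)` of the plane, are the vertices
of a weakly convex polygon, and its edge at the entry `x` is a positive multiple of the vector of
`x`. Convexity forces an entry lying strictly to the left of `x` to lie weakly to the left of the
entry `y` that follows `x`.

Given a locally optimal `σ`, some consecutive `x`, `y` in `σ` also occur in this order in a given
optimal `ρ`, or else `ρ` is `σ` reversed. By the remark above, cost-free swaps bring `x` and `y`
together in `ρ`. Replacing the pair by the single function `y ∘ x` in both sequences preserves the
condition on `σ` and shortens it, and induction applies.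
-/

open scoped List

namespace LinFun

/-- The cross product of the vectors `(β, 1 - α)` of `p` and `q`. It equals `β(p ∘ q) - β(q ∘ p)`,
so it is nonnegative when applying `p` before `q` is no worse than the other order. -/
def cross (p q : LinFun) : ℝ := p.b * (1 - q.a) - q.b * (1 - p.a)

/-- The cross product of the edges `p → q` and `r → s`, where a linear function stands for the
point `(-β, α)` of the plane. In particular `edgeCross p q q r ≥ 0` says that the path `p, q, r`
makes a left turn. -/
def edgeCross (p q r s : LinFun) : ℝ :=
  (p.b - q.b) * (s.a - r.a) - (r.b - s.b) * (q.a - p.a)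

theorem comp_idf (f : LinFun) : f.comp idf = f := by
  simp [comp, idf]

theorem idf_comp (f : LinFun) : idf.comp f = f := by
  simp [comp, idf]

theorem comp_assoc (f g h : LinFun) : (f.comp g).comp h = f.comp (g.comp h) := by
  simp only [comp, mk.injEq]
  constructor <;> ring

theorem cross_self (p : LinFun) : cross p p = 0 := by
  unfold cross; ring

theorem cross_idf_left (p : LinFun) : cross idf p = 0 := by
  simp [cross, idf]

theorem cross_idf_right (p : LinFun) : cross p idf = 0 := by
  simp [cross, idf]

theorem cross_swap (p q : LinFun) : cross q p = -cross p q := by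
  unfold cross; ring

theorem cross_comp_right (p g h : LinFun) :
    cross p (h.comp g) = h.a * cross p g + cross p h := by
  simp only [cross, comp]; ring

theorem cross_mul_cross (x y z w : LinFun) :
    cross x y * cross z w + cross x z * cross w y = cross z y * cross x w := by
  unfold cross; ring

theorem cross_nonpos_of_cross_pos {x y z w : LinFun} (hxz : 0 < cross x z)
    (hxy : 0 ≤ cross x y) (hyz : 0 ≤ cross y z) (hxw : 0 ≤ cross x w) (hzw : 0 ≤ cross z w) :
    cross w y ≤ 0 := by
  by_contra! hwy
  have plucker := cross_mul_cross x y z w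
  rw [cross_swap y z] at plucker
  linarith [mul_nonneg hxy hzw, mul_pos hxz hwy, mul_nonneg hyz hxw]

theorem edgeCross_comp (p q s t : LinFun) :
    edgeCross (s.comp p) s (t.comp q) t = s.a * t.a * cross p q := by
  simp only [edgeCross, cross, comp]; ring

theorem edgeCross_rotate (p q r : LinFun) : edgeCross q r r p = edgeCross p q q r := by
  unfold edgeCross; ring

/-- In a weakly convex pentagon `q₀ q₁ q₂ r s`, if the edge `r s` points strictly to the left of
`q₀ q₁`, then it points weakly to the left of `q₁ q₂`. -/
theorem edgeCross_nonneg_of_pentagon {q₀ q₁ q₂ r s : LinFun}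
    (h₀₁₂ : 0 ≤ edgeCross q₀ q₁ q₁ q₂) (h₀₁r : 0 ≤ edgeCross q₀ q₁ q₁ r)
    (h₁₂s : 0 ≤ edgeCross q₁ q₂ q₂ s) (hrs₁ : 0 ≤ edgeCross r s s q₁)
    (h : 0 < edgeCross q₀ q₁ r s) :
    0 ≤ edgeCross q₁ q₂ r s := by
  by_contra! h'
  have h₀₁s : 0 < edgeCross q₀ q₁ q₁ s := by
    have : edgeCross q₀ q₁ q₁ s = edgeCross q₀ q₁ q₁ r + edgeCross q₀ q₁ r s := by
      unfold edgeCross; ring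
    linarith
  -- The Plücker relation among the vectors `q₀ q₁`, `q₁ q₂`, `r s` and `q₁ s`.
  have plucker : edgeCross q₁ q₂ q₂ s * edgeCross q₀ q₁ r s
      - edgeCross q₀ q₁ q₁ s * edgeCross q₁ q₂ r s
      + edgeCross q₀ q₁ q₁ q₂ * edgeCross r s s q₁ = 0 := by
    unfold edgeCross; ring
  linarith [mul_nonneg h₁₂s h.le, mul_neg_of_pos_of_neg h₀₁s h', mul_nonneg h₀₁₂ hrs₁]

end LinFun

theorem foldl_comp_eq_compList_comp (L : List LinFun) (f : LinFun) :
    L.foldl (fun acc g => g.comp acc) f = (compList L).comp f := by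
  induction L generalizing f with
  | nil => exact (LinFun.idf_comp f).symm
  | cons g L ih =>
    simp only [compList, List.foldl_cons]
    rw [ih, ih, LinFun.comp_idf, LinFun.comp_assoc]

theorem compList_nil : compList [] = LinFun.idf := rfl

theorem compList_append (A B : List LinFun) :
    compList (A ++ B) = (compList B).comp (compList A) := by
  rw [compList, List.foldl_append, foldl_comp_eq_compList_comp]
  rfl

theorem compList_singleton (f : LinFun) : compList [f] = f := LinFun.comp_idf f

theorem compList_cons (f : LinFun) (L : List LinFun) :
    compList (f :: L) = (compList L).comp f := by
  rw [← List.singleton_append, compList_append, compList_singleton]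

theorem compList_flatten (Ls : List (List LinFun)) :
    compList Ls.flatten = compList (Ls.map compList) := by
  induction Ls with
  | nil => rfl
  | cons L Ls ih => rw [List.flatten_cons, compList_append, ih, List.map_cons, compList_cons]

theorem compList_a_pos {L : List LinFun} (hL : ∀ f ∈ L, 0 < f.a) : 0 < (compList L).a := by
  induction L with
  | nil => exact one_pos
  | cons f L ih =>
    rw [List.forall_mem_cons] at hL
    rw [compList_cons]
    exact mul_pos (ih hL.2) hL.1

theorem compList_swap_b (P A B S : List LinFun) :
    (compList (P ++ (B ++ (A ++ S)))).b = (compList (P ++ (A ++ (B ++ S)))).b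
      + (compList S).a * (compList A).cross (compList B) := by
  simp only [compList_append, LinFun.comp, LinFun.cross]; ring

theorem cross_compList_nonneg_of_swap_b_le {P A B S : List LinFun} (hS : ∀ f ∈ S, 0 < f.a)
    (h : (compList (P ++ (A ++ (B ++ S)))).b ≤ (compList (P ++ (B ++ (A ++ S)))).b) :
    0 ≤ (compList A).cross (compList B) := by
  rw [compList_swap_b P A B S, le_add_iff_nonneg_right] at h
  exact nonneg_of_mul_nonneg_right h (compList_a_pos hS)

theorem edgeCross_compList_cons (x y : LinFun) (s t : List LinFun) :
    LinFun.edgeCross (compList (x :: s)) (compList s) (compList (y :: t)) (compList t)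
      = (compList s).a * (compList t).a * x.cross y := by
  rw [compList_cons, compList_cons, LinFun.edgeCross_comp]

theorem edgeCross_compList_cons_nonneg_iff {x y : LinFun} {s t : List LinFun}
    (hs : ∀ f ∈ s, 0 < f.a) (ht : ∀ f ∈ t, 0 < f.a) :
    0 ≤ LinFun.edgeCross (compList (x :: s)) (compList s) (compList (y :: t)) (compList t)
      ↔ 0 ≤ x.cross y := by
  rw [edgeCross_compList_cons,
    mul_nonneg_iff_of_pos_left (mul_pos (compList_a_pos hs) (compList_a_pos ht))]

theorem edgeCross_compList_cons_pos_iff {x y : LinFun} {s t : List LinFun}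
    (hs : ∀ f ∈ s, 0 < f.a) (ht : ∀ f ∈ t, 0 < f.a) :
    0 < LinFun.edgeCross (compList (x :: s)) (compList s) (compList (y :: t)) (compList t)
      ↔ 0 < x.cross y := by
  rw [edgeCross_compList_cons,
    mul_pos_iff_of_pos_left (mul_pos (compList_a_pos hs) (compList_a_pos ht))]

theorem perm_swap_blocks {α : Type*} (P A B S : List α) :
    P ++ (B ++ (A ++ S)) ~ P ++ (A ++ (B ++ S)) := by
  simpa only [List.append_assoc] using (List.perm_append_comm.append_right S).append_left P

/-- No swap of two adjacent blocks of `L` decreases `β` of the composite, when all functions are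
monotone. The positive slope of what is applied after the blocks is factored out. -/
def SwapStable (L : List LinFun) : Prop :=
  ∀ A B, A ++ B <:+: L → 0 ≤ (compList A).cross (compList B)

/-- The order in which `L` lists its functions minimizes `β` of the composite. -/
def OptimalOrder (L : List LinFun) : Prop :=
  ∀ R : List LinFun, R ~ L → (compList L).b ≤ (compList R).b

namespace SwapStable

variable {L : List LinFun}

theorem cross_nonneg_of_pair (h : SwapStable L) {x y : LinFun} (hxy : [x, y] <:+: L) :
    0 ≤ x.cross y := by
  simpa only [compList_singleton] using h [x] [y] hxy

theorem edgeCross_nonneg (h : SwapStable L) (hpos : ∀ f ∈ L, 0 < f.a) {q r s : List LinFun}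
    (hq : q <:+ L) (hr : r <:+ q) (hs : s <:+ r) :
    0 ≤ LinFun.edgeCross (compList q) (compList r) (compList r) (compList s) := by
  have hra : 0 < (compList r).a := compList_a_pos fun f hf => hpos f ((hr.trans hq).mem hf)
  have hsa : 0 < (compList s).a :=
    compList_a_pos fun f hf => hpos f ((hs.trans (hr.trans hq)).mem hf)
  obtain ⟨P, rfl⟩ := hq
  obtain ⟨A, rfl⟩ := hr
  obtain ⟨B, rfl⟩ := hs
  rw [compList_append A, compList_append B, LinFun.edgeCross_comp, ← compList_append B]
  exact mul_nonneg (mul_pos hra hsa).le (h A B ⟨P, s, by simp⟩)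

theorem edgeCross_nonneg_rotate (h : SwapStable L) (hpos : ∀ f ∈ L, 0 < f.a)
    {q r s : List LinFun} (hq : q <:+ L) (hr : r <:+ q) (hs : s <:+ r) :
    0 ≤ LinFun.edgeCross (compList r) (compList s) (compList s) (compList q) :=
  (h.edgeCross_nonneg hpos hq hr hs).trans_eq (LinFun.edgeCross_rotate _ _ _).symm

theorem cross_nonneg_of_mem_after {P S : List LinFun} {x y z : LinFun}
    (h : SwapStable (P ++ x :: y :: S)) (hpos : ∀ f ∈ P ++ x :: y :: S, 0 < f.a) (hz : z ∈ S)
    (hxz : 0 < x.cross z) : 0 ≤ y.cross z := by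
  obtain ⟨C, S, rfl⟩ := List.append_of_mem hz
  have hyCzS : ∀ f ∈ y :: (C ++ z :: S), 0 < f.a := fun f hf => hpos f (by grind)
  have hCzS : ∀ f ∈ C ++ z :: S, 0 < f.a := fun f hf => hpos f (by grind)
  have hS : ∀ f ∈ S, 0 < f.a := fun f hf => hpos f (by grind)
  rw [← edgeCross_compList_cons_nonneg_iff hCzS hS]
  rw [← edgeCross_compList_cons_pos_iff hyCzS hS] at hxz
  exact LinFun.edgeCross_nonneg_of_pentagon
    (h.edgeCross_nonneg hpos ⟨P, rfl⟩ ⟨[x], rfl⟩ ⟨[y], rfl⟩)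
    (h.edgeCross_nonneg hpos ⟨P, rfl⟩ ⟨[x], rfl⟩ ⟨y :: C, rfl⟩)
    (h.edgeCross_nonneg hpos ⟨P ++ [x], by simp⟩ ⟨[y], rfl⟩ ⟨C ++ [z], by simp⟩)
    (h.edgeCross_nonneg_rotate hpos ⟨P ++ [x], by simp⟩ ⟨y :: C, rfl⟩ ⟨[z], rfl⟩) hxz

theorem cross_nonneg_of_mem_before {P S : List LinFun} {x y z : LinFun}
    (h : SwapStable (P ++ x :: y :: S)) (hpos : ∀ f ∈ P ++ x :: y :: S, 0 < f.a) (hz : z ∈ P)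
    (hxz : 0 < x.cross z) : 0 ≤ y.cross z := by
  obtain ⟨P, C, rfl⟩ := List.append_of_mem hz
  rw [List.append_assoc, List.cons_append] at h hpos
  have hCxyS : ∀ f ∈ C ++ x :: y :: S, 0 < f.a := fun f hf => hpos f (by grind)
  have hyS : ∀ f ∈ y :: S, 0 < f.a := fun f hf => hpos f (by grind)
  have hS : ∀ f ∈ S, 0 < f.a := fun f hf => hpos f (by grind)
  rw [← edgeCross_compList_cons_nonneg_iff hS hCxyS]
  rw [← edgeCross_compList_cons_pos_iff hyS hCxyS] at hxz
  exact LinFun.edgeCross_nonneg_of_pentagon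
    (h.edgeCross_nonneg hpos ⟨P ++ z :: C, by simp⟩ ⟨[x], rfl⟩ ⟨[y], rfl⟩)
    (h.edgeCross_nonneg_rotate hpos ⟨P, rfl⟩ ⟨z :: C, rfl⟩ ⟨[x], rfl⟩)
    (h.edgeCross_nonneg_rotate hpos ⟨P ++ [z], by simp⟩ ⟨C ++ [x], by simp⟩ ⟨[y], rfl⟩)
    (h.edgeCross_nonneg hpos ⟨P, rfl⟩ ⟨[z], rfl⟩ ⟨C ++ [x], by simp⟩) hxz

theorem cross_nonneg_of_mem (h : SwapStable L) (hpos : ∀ f ∈ L, 0 < f.a) {x y z : LinFun}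
    (hxy : [x, y] <:+: L) (hz : z ∈ L) (hxz : 0 < x.cross z) : 0 ≤ y.cross z := by
  obtain ⟨P, S, rfl⟩ := hxy
  simp only [List.append_assoc, List.cons_append, List.nil_append] at h hpos hz
  simp only [List.mem_append, List.mem_cons] at hz
  rcases hz with hz | rfl | rfl | hz
  · exact h.cross_nonneg_of_mem_before hpos hz hxz
  · exact absurd hxz (LinFun.cross_self z).not_gt
  · exact (LinFun.cross_self z).ge
  · exact h.cross_nonneg_of_mem_after hpos hz hxz

theorem cross_compList_cons_eq_zero (h : SwapStable L) {X : List LinFun} {x y z : LinFun}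
    (hxz : 0 < x.cross z) (hxy : 0 ≤ x.cross y) (hyz : 0 ≤ y.cross z)
    (hL : x :: z :: (X ++ [y]) <:+: L) : (compList (z :: X)).cross y = 0 := by
  obtain ⟨P, S, rfl⟩ := hL
  have hxC : 0 ≤ x.cross (compList (z :: X)) := by
    simpa only [compList_singleton] using h [x] (z :: X) ⟨P, y :: S, by simp⟩
  have hCy : 0 ≤ (compList (z :: X)).cross y := by
    simpa only [compList_singleton] using h (z :: X) [y] ⟨P ++ [x], S, by simp⟩
  have hzC : 0 ≤ z.cross (compList (z :: X)) := by
    have hzX := h [z] X ⟨P ++ [x], y :: S, by simp⟩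
    rwa [compList_cons, LinFun.cross_comp_right, LinFun.cross_self, mul_zero, zero_add,
      ← compList_singleton z]
  exact (LinFun.cross_nonpos_of_cross_pos hxz hxy hyz hxC hzC).antisymm hCy

theorem of_flatten {Ls : List (List LinFun)} (h : SwapStable Ls.flatten) :
    SwapStable (Ls.map compList) := by
  intro A B hAB
  obtain ⟨Ms, ⟨P, S, rfl⟩, hMs⟩ := List.infix_map_iff.1 hAB
  obtain ⟨As, Bs, rfl, rfl, rfl⟩ := List.append_eq_map_iff.1 hMs
  rw [← compList_flatten, ← compList_flatten]
  exact h _ _ ⟨P.flatten, S.flatten, by simp⟩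

theorem comp_of_pair {P S : List LinFun} {x y : LinFun} (h : SwapStable (P ++ x :: y :: S)) :
    SwapStable (P ++ y.comp x :: S) := by
  have := of_flatten (Ls := P.map ([·]) ++ [x, y] :: S.map ([·]))
    (by simpa [← List.flatMap_def] using h)
  simpa [Function.comp_def, compList_singleton, compList_cons, compList_nil,
    LinFun.idf_comp] using this

end SwapStable

theorem compList_comp_of_pair (P S : List LinFun) (x y : LinFun) :
    compList (P ++ y.comp x :: S) = compList (P ++ x :: y :: S) := by
  simp only [compList_append, compList_cons, LinFun.comp_assoc]

namespace OptimalOrder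

theorem swapStable {L : List LinFun} (h : OptimalOrder L) (hpos : ∀ f ∈ L, 0 < f.a) :
    SwapStable L := by
  rintro A B ⟨P, S, rfl⟩
  simp only [List.append_assoc] at h hpos
  exact cross_compList_nonneg_of_swap_b_le (fun f hf => hpos f (by grind))
    (h _ (perm_swap_blocks P A B S))

theorem swap {P A B S : List LinFun} (h : OptimalOrder (P ++ (A ++ (B ++ S))))
    (hAB : (compList A).cross (compList B) = 0) : OptimalOrder (P ++ (B ++ (A ++ S))) := by
  intro R hR
  rw [compList_swap_b, hAB, mul_zero, add_zero]
  exact h R (hR.trans (perm_swap_blocks P A B S))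

end OptimalOrder

theorem exists_perm_optimalOrder (L : List LinFun) :
    ∃ R : List LinFun, R ~ L ∧ OptimalOrder R := by
  have hfin : {R : List LinFun | R ~ L}.Finite := by
    simpa only [List.mem_permutations] using L.permutations.finite_toSet
  obtain ⟨R, hR, hmin⟩ :=
    Set.exists_min_image _ (fun R => (compList R).b) hfin ⟨L, List.Perm.refl L⟩
  exact ⟨R, hR, fun R' hR' => hmin R' (hR'.trans hR)⟩

theorem OptimalOrder.exists_perm_adjacent {P X S : List LinFun} {x y : LinFun}
    (h : OptimalOrder (P ++ x :: (X ++ y :: S)))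
    (hpos : ∀ f ∈ P ++ x :: (X ++ y :: S), 0 < f.a) (hxy : 0 ≤ x.cross y)
    (hX : ∀ z ∈ X, 0 < x.cross z → 0 ≤ y.cross z) :
    ∃ P' S', P' ++ x :: y :: S' ~ P ++ x :: (X ++ y :: S) ∧
      OptimalOrder (P' ++ x :: y :: S') := by
  induction X generalizing P with
  | nil => exact ⟨P, S, List.Perm.refl _, h⟩
  | cons z X ih =>
    have hstable := h.swapStable hpos
    have hxz : 0 ≤ x.cross z := hstable.cross_nonneg_of_pair ⟨P, X ++ y :: S, by simp⟩
    rcases hxz.eq_or_lt with hxz | hxz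
    · have hswap : OptimalOrder (P ++ ([z] ++ ([x] ++ (X ++ y :: S)))) :=
        OptimalOrder.swap h (by rw [compList_singleton, compList_singleton, hxz])
      have hperm := perm_swap_blocks P [x] [z] (X ++ y :: S)
      rw [← List.append_assoc] at hswap hperm
      obtain ⟨P', S', hP', h'⟩ := ih hswap (fun f hf => hpos f (hperm.mem_iff.1 hf))
        (fun w hw => hX w (List.mem_cons_of_mem z hw))
      exact ⟨P', S', hP'.trans hperm, h'⟩
    · have hCy : (compList (z :: X)).cross y = 0 :=
        hstable.cross_compList_cons_eq_zero hxz hxy (hX z List.mem_cons_self hxz)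
          ⟨P, S, by simp⟩
      have hperm := perm_swap_blocks (P ++ [x]) (z :: X) [y] S
      have hswap := OptimalOrder.swap (P := P ++ [x]) (A := z :: X) (B := [y]) (S := S)
        (by simpa using h) (by rwa [compList_singleton])
      exact ⟨P, z :: X ++ S, by simpa using hperm, by simpa using hswap⟩

theorem exists_infix_sublist_or_eq_reverse {α : Type*} {σ ρ : List α} (h : ρ ~ σ) :
    (∃ x y, [x, y] <:+: σ ∧ [x, y] <+ ρ) ∨ ρ = σ.reverse := by
  induction σ generalizing ρ with
  | nil => exact Or.inr h.eq_nil
  | cons x σ ih =>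
    obtain ⟨A, B, rfl⟩ := List.append_of_mem (h.mem_iff.2 List.mem_cons_self)
    have hAB : A ++ B ~ σ := (List.perm_cons x).1 (List.perm_middle.symm.trans h)
    have hsub : A ++ B <+ A ++ x :: B := (List.sublist_cons_self x B).append_left A
    rcases ih hAB with ⟨u, v, hσ, hρ⟩ | hrev
    · exact Or.inl ⟨u, v, List.infix_cons hσ, hρ.trans hsub⟩
    rcases B.eq_nil_or_concat with rfl | ⟨B, y, rfl⟩
    · right
      simpa using hrev
    · left
      obtain rfl : σ = y :: (A ++ B).reverse := by simpa using List.reverse_eq_iff.1 hrev.symm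
      exact ⟨x, y, ⟨[], (A ++ B).reverse, rfl⟩,
        List.cons_sublist_iff.2 ⟨A ++ [x], B ++ [y], by simp⟩⟩

theorem exists_append_cons_append_cons_of_sublist {α : Type*} {x y : α} {L : List α}
    (h : [x, y] <+ L) : ∃ P X S, L = P ++ x :: (X ++ y :: S) := by
  obtain ⟨A, B, rfl, hA, hB⟩ := List.cons_sublist_iff.1 h
  obtain ⟨P, X, rfl⟩ := List.append_of_mem hA
  obtain ⟨Y, S, rfl⟩ := List.append_of_mem (List.singleton_sublist.1 hB)
  exact ⟨P, X ++ Y, S, by simp⟩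

theorem SwapStable.exists_common_adjacent_pair {σ : List LinFun} (hpos : ∀ f ∈ σ, 0 < f.a)
    (h : SwapStable σ) (hσ : 2 ≤ σ.length) :
    ∃ P x y S P' S', σ = P ++ x :: y :: S ∧ P' ++ x :: y :: S' ~ σ ∧
      OptimalOrder (P' ++ x :: y :: S') := by
  obtain ⟨ρ, hρ, hopt⟩ := exists_perm_optimalOrder σ
  have hρpos : ∀ f ∈ ρ, 0 < f.a := fun f hf => hpos f (hρ.mem_iff.1 hf)
  rcases exists_infix_sublist_or_eq_reverse hρ with ⟨x, y, hxyσ, hxyρ⟩ | rfl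
  · obtain ⟨P', X, S', rfl⟩ := exists_append_cons_append_cons_of_sublist hxyρ
    have hX : ∀ z ∈ X, 0 < x.cross z → 0 ≤ y.cross z := fun z hz =>
      h.cross_nonneg_of_mem hpos hxyσ (hρ.mem_iff.1 (by simp [hz]))
    obtain ⟨P', S', hperm, hopt'⟩ :=
      hopt.exists_perm_adjacent hρpos (h.cross_nonneg_of_pair hxyσ) hX
    obtain ⟨P, S, rfl⟩ := hxyσ
    exact ⟨P, x, y, S, P', S', by simp, hperm.trans hρ, hopt'⟩
  · match σ, hσ with
    | x :: y :: τ, _ =>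
      have hrev : (x :: y :: τ).reverse = τ.reverse ++ ([y] ++ ([x] ++ [])) := by simp
      have hxy : 0 ≤ x.cross y := h.cross_nonneg_of_pair ⟨[], τ, rfl⟩
      have hyx : 0 ≤ y.cross x :=
        (hopt.swapStable hρpos).cross_nonneg_of_pair ⟨τ.reverse, [], by simp⟩
      rw [hrev] at hopt hρ
      refine ⟨[], x, y, τ, τ.reverse, [], rfl,
        (perm_swap_blocks τ.reverse [y] [x] []).trans hρ, hopt.swap ?_⟩
      rw [LinFun.cross_swap] at hyx
      rw [compList_singleton, compList_singleton, LinFun.cross_swap]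
      linarith

theorem SwapStable.optimalOrder {σ : List LinFun} (hpos : ∀ f ∈ σ, 0 < f.a)
    (h : SwapStable σ) : OptimalOrder σ := by
  induction hn : σ.length using Nat.strong_induction_on generalizing σ with
  | _ n ih =>
  intro R hR
  rcases lt_or_ge σ.length 2 with hσ | hσ
  · match σ, hσ with
    | [], _ => rw [hR.eq_nil]
    | [x], _ => rw [List.perm_singleton.1 hR]
  obtain ⟨P, x, y, S, P', S', rfl, hperm, hopt⟩ := h.exists_common_adjacent_pair hpos hσ
  have hpos' : ∀ f ∈ P ++ y.comp x :: S, 0 < f.a := by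
    have hxy : 0 < (y.comp x).a := mul_pos (hpos y (by simp)) (hpos x (by simp))
    grind
  have hmerged : OptimalOrder (P ++ y.comp x :: S) :=
    ih _ (by simp [← hn]) hpos' h.comp_of_pair rfl
  have hperm' : P' ++ y.comp x :: S' ~ P ++ y.comp x :: S := by
    have hrest : P' ++ S' ~ P ++ S := List.perm_inv_core (List.perm_inv_core hperm)
    exact List.perm_middle.trans ((hrest.cons _).trans List.perm_middle.symm)
  calc (compList (P ++ x :: y :: S)).b
      = (compList (P ++ y.comp x :: S)).b := by rw [compList_comp_of_pair]
    _ ≤ (compList (P' ++ y.comp x :: S')).b := hmerged _ hperm'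
    _ = (compList (P' ++ x :: y :: S')).b := by rw [compList_comp_of_pair]
    _ ≤ (compList R).b := hopt R (hR.trans hperm.symm)

theorem exists_perm_ofFn_eq {n : ℕ} {σ : Equiv.Perm (Fin n)} {L : List (Fin n)}
    (h : L ~ List.ofFn σ) : ∃ μ : Equiv.Perm (Fin n), List.ofFn μ = L := by
  have hlen : L.length = n := by simpa using h.length_eq
  have hnodup : L.Nodup := h.nodup_iff.2 (List.nodup_ofFn.2 σ.injective)
  let μ : Fin n → Fin n := fun i => L.get (i.cast hlen.symm)
  have hμ : Function.Injective μ :=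
    (List.nodup_iff_injective_get.1 hnodup).comp (Fin.cast_injective _)
  refine ⟨Equiv.ofBijective μ (Finite.injective_iff_bijective.1 hμ), ?_⟩
  exact List.ext_getElem (by simp [hlen]) (by simp [μ])

theorem inNbhd_of_ofFn_eq {n : ℕ} {σ μ : Equiv.Perm (Fin n)} {P A B S : List (Fin n)}
    (hA : A ≠ []) (hB : B ≠ []) (hσ : List.ofFn σ = P ++ (A ++ (B ++ S)))
    (hμ : List.ofFn μ = P ++ (B ++ (A ++ S))) : InNbhd σ μ := by
  have hlen : P.length + (A.length + (B.length + S.length)) = n := by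
    simpa using (congrArg List.length hσ).symm
  have hA := List.length_pos_of_ne_nil hA
  have hB := List.length_pos_of_ne_nil hB
  have hσ' (i : Fin n) : σ i = (P ++ (A ++ (B ++ S)))[i.val]'(by simp; omega) := by
    simp [← hσ]
  have hμ' (i : Fin n) : μ i = (P ++ (B ++ (A ++ S)))[i.val]'(by simp; omega) := by
    simp [← hμ]
  refine ⟨P.length, P.length + A.length - 1, P.length + A.length + B.length - 1,
    by omega, by omega, by omega, fun i hi => ?_, fun i hl hm => ?_, fun i hm hr => ?_⟩ <;>
    · simp only [hσ', hμ', List.getElem_append]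
      grind

theorem LocallyOptimal.swapStable {n : ℕ} {f : Fin n → LinFun} {σ : Equiv.Perm (Fin n)}
    (h : LocallyOptimal f σ) (hf : ∀ i, 0 < (f i).a) : SwapStable (permList f σ) := by
  have hmap (τ : Equiv.Perm (Fin n)) : permList f τ = (List.ofFn τ).map f := by
    rw [List.map_ofFn]; rfl
  intro A B hAB
  rw [hmap] at hAB
  obtain ⟨M, ⟨P, S, hσ⟩, hM⟩ := List.infix_map_iff.1 hAB
  obtain ⟨A, B, rfl, rfl, rfl⟩ := List.append_eq_map_iff.1 hM
  rcases eq_or_ne A [] with rfl | hA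
  · exact (LinFun.cross_idf_left _).ge
  rcases eq_or_ne B [] with rfl | hB
  · exact (LinFun.cross_idf_right _).ge
  simp only [List.append_assoc] at hσ
  obtain ⟨μ, hμ⟩ := exists_perm_ofFn_eq (hσ ▸ perm_swap_blocks P A B S)
  have hle := h μ (inNbhd_of_ofFn_eq hA hB hσ.symm hμ)
  simp only [permComp, hmap, ← hσ, hμ, List.map_append] at hle
  exact cross_compList_nonneg_of_swap_b_le (by simp [hf]) hle

theorem permList_perm {n : ℕ} (f : Fin n → LinFun) (σ : Equiv.Perm (Fin n)) :
    permList f σ ~ List.ofFn f :=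
  σ.ofFn_comp_perm f

/-- global optimality is equivalent to local optimality for monotone
linear functions. -/
theorem stmt12 {n : ℕ} (f : Fin n → LinFun) (hf : ∀ i, 0 < (f i).a)
    (σ : Equiv.Perm (Fin n)) :
    IsMinimum f σ ↔ LocallyOptimal f σ := by
  refine ⟨fun h μ _ => h μ, fun h ρ => ?_⟩
  have hpos : ∀ g ∈ permList f σ, 0 < g.a := by
    simp [permList, hf]
  have hopt : OptimalOrder (permList f σ) := (h.swapStable hf).optimalOrder hpos
  exact hopt _ ((permList_perm f ρ).trans (permList_perm f σ).symm)
end
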